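/- Let n, k ∈ ℕ with 2 ≤ 2k < n and let γ ∈ (0, n−2k). Suppose ψ ∈ C^{2k}(ℝⁿ∖{0}) satisfies Δ^k ψ = 0 on ℝⁿ∖{0} and there is C > 0 with |ψ(x)| ≤ C·|x|^{−γ} for all x ≠ 0. Then ψ ≡ 0 on ℝⁿ∖{0}. -/

import Mathlib

/-!
Induction on `k`. If `Δ^(k+1) ψ = 0` off the origin, then `v = Δ^k ψ` is harmonic there, and it
suffices to show that `v = 0`, since this lowers the order of the equation and the condition on
`γ` only becomes weaker.

* Decay of `v` (`interior_bound`, `iterLap_decay`). A harmonic function has the mean value property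
  against a radial bump `φ` (`mean_value`). Moving the Laplacians onto the bump by parts expresses
  `Δ^k u (0) ∫ φ` as `∫ u Δ^k φ`, so `|Δ^k u (0)|` is at most a constant times the supremum of `|u|`
  over the unit ball. Applied to `u (y) = ψ (x + (‖x‖ / 4) y)` this gives
  `|v x| ≤ D ‖x‖ ^ (-(γ + 2 k))`.
* Maximum principle (`nonpos_of_harmonic`). With `β = γ + 2 k < n - 2`, choose `β < α < n - 2`. The
  function `‖x‖ ^ (-α)` is strictly superharmonic, so `v - δ ‖x‖ ^ (-α)` has positive Laplacian and
  no local maximum. It tends to `-∞` at the origin and to `0` at infinity, so a positive value would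
  force a positive maximum. Hence `v ≤ 0`, and the same for `-v`.
-/

open MeasureTheory Metric Filter Topology Real

noncomputable section

def lap {n : ℕ} (u : EuclideanSpace ℝ (Fin n) → ℝ) : EuclideanSpace ℝ (Fin n) → ℝ :=
  fun x => ∑ i : Fin n, iteratedFDeriv ℝ 2 u x (fun _ => EuclideanSpace.single i 1)

def iterLap {n : ℕ} (k : ℕ) (u : EuclideanSpace ℝ (Fin n) → ℝ) :
    EuclideanSpace ℝ (Fin n) → ℝ :=
  lap^[k] u

def twoStar (n k : ℕ) : ℝ := 2 * n / ((n : ℝ) - 2 * k)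

def ank (n k : ℕ) : ℝ :=
  (∏ j ∈ Finset.range (2 * k), ((n : ℝ) + 2 * ((j : ℝ) - (k : ℝ)))) ^ (-(1 : ℝ) / (k : ℝ))

def Ubub (n k : ℕ) (x : EuclideanSpace ℝ (Fin n)) : ℝ :=
  (1 / (1 + ank n k * ‖x‖ ^ 2)) ^ (((n : ℝ) - 2 * k) / 2)

def BlowUpSetup (n k : ℕ) (M : ℝ) (lam : ℕ → ℝ)
    (u : ℕ → EuclideanSpace ℝ (Fin n) → ℝ) : Prop :=
  (∀ i, 0 < lam i) ∧ Filter.Tendsto lam Filter.atTop (nhds 0) ∧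
  (∀ i, ContDiff ℝ (2 * k : ℕ) (u i)) ∧
  (∀ i, ∀ x y : EuclideanSpace ℝ (Fin n), ‖x‖ = ‖y‖ → u i x = u i y) ∧
  (∀ i, ∀ x ∈ Metric.ball (0 : EuclideanSpace ℝ (Fin n)) 1,
    iterLap k (u i) x - lam i * u i x = |u i x| ^ (twoStar n k - 2) * u i x) ∧
  (∀ i, ∀ x : EuclideanSpace ℝ (Fin n), ‖x‖ = 1 → ∀ j < k,
    iteratedFDeriv ℝ j (u i) x (fun _ => x) = 0) ∧
  (∀ i, ∃ x ∈ Metric.closedBall (0 : EuclideanSpace ℝ (Fin n)) 1, u i x ≠ 0) ∧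
  (∀ i, (∫ x in Metric.ball (0 : EuclideanSpace ℝ (Fin n)) 1, |u i x| ^ twoStar n k)
      ≤ M ^ twoStar n k)

def CLocConv {n : ℕ} (m : ℕ) (S : Set (EuclideanSpace ℝ (Fin n)))
    (f : ℕ → EuclideanSpace ℝ (Fin n) → ℝ) (g : EuclideanSpace ℝ (Fin n) → ℝ) : Prop :=
  ∀ K : Set (EuclideanSpace ℝ (Fin n)), K ⊆ S → IsCompact K → ∀ j ≤ m,
    Filter.Tendsto
      (fun i => ⨆ x : K, ‖iteratedFDeriv ℝ j (f i) (x : EuclideanSpace ℝ (Fin n))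
        - iteratedFDeriv ℝ j g (x : EuclideanSpace ℝ (Fin n))‖)
      Filter.atTop (nhds 0)

def Concentration (n k : ℕ) (u : ℕ → EuclideanSpace ℝ (Fin n) → ℝ)
    (ν : ℕ → ℝ) (ε₀ : ℝ) : Prop :=
  (∀ i, 0 < ν i) ∧ Filter.Tendsto ν Filter.atTop (nhds 0) ∧ (ε₀ = 1 ∨ ε₀ = -1) ∧
  CLocConv (2 * k) {(0 : EuclideanSpace ℝ (Fin n))}ᶜ
    (fun i z => (ν i) ^ (((n : ℝ) - 2 * k) / 2) * u i ((ν i) • z))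
    (fun z => ε₀ * Ubub n k z) ∧
  Filter.Tendsto (fun R : ℝ => Filter.limsup (fun i =>
      ⨆ x : {x : EuclideanSpace ℝ (Fin n) //
        x ∈ Metric.ball (0 : EuclideanSpace ℝ (Fin n)) 1 ∧ R * ν i ≤ ‖x‖},
        ‖(x : EuclideanSpace ℝ (Fin n))‖ ^ (((n : ℝ) - 2 * k) / 2)
          * |u i (x : EuclideanSpace ℝ (Fin n))|) Filter.atTop)
    Filter.atTop (nhds 0)

def Tfun (n k : ℕ) (u : EuclideanSpace ℝ (Fin n) → ℝ) (x : EuclideanSpace ℝ (Fin n)) : ℝ :=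
  (((n : ℝ) - 2 * k) / 2) * u x + fderiv ℝ u x x

def ndS {n : ℕ} (u : EuclideanSpace ℝ (Fin n) → ℝ) (x : EuclideanSpace ℝ (Fin n)) : ℝ :=
  fderiv ℝ u x (‖x‖⁻¹ • x)

def halfLapSq {n : ℕ} (k : ℕ) (u : EuclideanSpace ℝ (Fin n) → ℝ)
    (x : EuclideanSpace ℝ (Fin n)) : ℝ :=
  if k % 2 = 0 then (iterLap (k / 2) u x) ^ 2 else ‖gradient (iterLap (k / 2) u) x‖ ^ 2

def Sfun (n k : ℕ) (u : EuclideanSpace ℝ (Fin n) → ℝ) (x : EuclideanSpace ℝ (Fin n)) : ℝ :=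
  (∑ i ∈ Finset.range (k / 2),
    (-(ndS (iterLap (k - i - 1) u) x) * iterLap i (Tfun n k u) x
      + iterLap (k - i - 1) u x * ndS (iterLap i (Tfun n k u)) x))
  - (if k % 2 = 1 then ndS (iterLap (k / 2) u) x * iterLap (k / 2) (Tfun n k u) x else 0)

def sphVol (n : ℕ) : ℝ :=
  (μH[(n : ℝ) - 1] (Metric.sphere (0 : EuclideanSpace ℝ (Fin n)) 1)).toReal

def Cnk (n k : ℕ) : ℝ :=
  1 / (((n : ℝ) - 2) * sphVol n *
    ∏ i ∈ Finset.Icc 1 (k - 1), (((n : ℝ) - 2 * k + 2 * ((i : ℝ) - 1)) * (2 * (k : ℝ) - 2 * (i : ℝ))))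


/-! ### Elementary properties of the iterated Laplacian -/

section Basic

variable {n : ℕ}

lemma lap_eq_fderiv (u : EuclideanSpace ℝ (Fin n) → ℝ) (x : EuclideanSpace ℝ (Fin n)) :
    lap u x = ∑ i : Fin n, fderiv ℝ (fderiv ℝ u) x (EuclideanSpace.single i 1)
      (EuclideanSpace.single i 1) := by
  simp only [lap, iteratedFDeriv_two_apply]

lemma iterLap_succ (j : ℕ) (u : EuclideanSpace ℝ (Fin n) → ℝ) :
    iterLap (j + 1) u = lap (iterLap j u) := by
  simp only [iterLap, Function.iterate_succ_apply']

lemma iterLap_zero (u : EuclideanSpace ℝ (Fin n) → ℝ) : iterLap 0 u = u := rfl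

lemma iterLap_eventuallyEq {u v : EuclideanSpace ℝ (Fin n) → ℝ} {x : EuclideanSpace ℝ (Fin n)}
    (h : u =ᶠ[𝓝 x] v) (j : ℕ) : iterLap j u =ᶠ[𝓝 x] iterLap j v := by
  induction j with
  | zero => exact h
  | succ j ih =>
    rw [iterLap_succ, iterLap_succ]
    filter_upwards [EventuallyEq.iteratedFDeriv ℝ ih 2] with y hy
    simp only [lap, hy]

lemma iterLap_const_zero (j : ℕ) :
    iterLap j (fun _ : EuclideanSpace ℝ (Fin n) => (0 : ℝ)) = fun _ => 0 := by
  induction j with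
  | zero => rfl
  | succ j ih =>
    rw [iterLap_succ, ih]
    ext x
    simp [lap_eq_fderiv]

lemma contDiffOn_lap {u : EuclideanSpace ℝ (Fin n) → ℝ} {S : Set (EuclideanSpace ℝ (Fin n))}
    (hS : IsOpen S) {m : ℕ} (hu : ContDiffOn ℝ ((m + 2 : ℕ)) u S) :
    ContDiffOn ℝ (m : ℕ) (lap u) S := by
  have h1 : ContDiffOn ℝ ((m + 1 : ℕ)) (fderiv ℝ u) S :=
    hu.fderiv_of_isOpen hS (by norm_cast)
  have h2 : ContDiffOn ℝ (m : ℕ) (fderiv ℝ (fderiv ℝ u)) S :=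
    h1.fderiv_of_isOpen hS (by norm_cast)
  have h3 : lap u = fun x => ∑ i : Fin n, fderiv ℝ (fderiv ℝ u) x (EuclideanSpace.single i 1)
      (EuclideanSpace.single i 1) := funext (lap_eq_fderiv u)
  rw [h3]
  exact ContDiffOn.sum fun i _ =>
    (h2.clm_apply contDiffOn_const).clm_apply contDiffOn_const

lemma contDiffOn_iterLap {S : Set (EuclideanSpace ℝ (Fin n))} (hS : IsOpen S)
    {u : EuclideanSpace ℝ (Fin n) → ℝ} {m : ℕ} (j : ℕ)
    (hu : ContDiffOn ℝ ((m + 2 * j : ℕ)) u S) : ContDiffOn ℝ (m : ℕ) (iterLap j u) S := by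
  induction j generalizing m with
  | zero => exact hu
  | succ j ih =>
    rw [iterLap_succ]
    refine contDiffOn_lap hS (ih ?_)
    convert hu using 2
    ring

lemma contDiff_iterLap {u : EuclideanSpace ℝ (Fin n) → ℝ} {m : ℕ} (j : ℕ)
    (hu : ContDiff ℝ ((m + 2 * j : ℕ)) u) : ContDiff ℝ (m : ℕ) (iterLap j u) :=
  contDiffOn_univ.1 (contDiffOn_iterLap isOpen_univ j hu.contDiffOn)

lemma fderiv_comp_affine {F : Type*} [NormedAddCommGroup F] [NormedSpace ℝ F]
    (u : EuclideanSpace ℝ (Fin n) → F) (x y : EuclideanSpace ℝ (Fin n)) (r : ℝ) :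
    fderiv ℝ (fun y => u (x + r • y)) y = r • fderiv ℝ u (x + r • y) := by
  have h := fderiv_comp_smul (𝕜 := ℝ) (f := fun z => u (x + z)) (x := y) r
  rw [h, fderiv_comp_add_left]

lemma lap_const_mul_comp_affine (u : EuclideanSpace ℝ (Fin n) → ℝ)
    (x : EuclideanSpace ℝ (Fin n)) (c r : ℝ) :
    lap (fun y => c * u (x + r • y)) = fun y => c * r ^ 2 * lap u (x + r • y) := by
  ext y
  have h1 : fderiv ℝ (fun y => c * u (x + r • y)) =
      fun y => (c * r) • fderiv ℝ u (x + r • y) := by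
    ext1 z
    have := congrFun (fderiv_const_smul_field (𝕜 := ℝ) (f := fun y => u (x + r • y)) c) z
    rw [mul_smul, ← fderiv_comp_affine]
    exact this
  have h3 : fderiv ℝ (fun y => (c * r) • fderiv ℝ u (x + r • y)) y =
      (c * r) • r • fderiv ℝ (fderiv ℝ u) (x + r • y) := by
    rw [← fderiv_comp_affine]
    exact congrFun (fderiv_const_smul_field (𝕜 := ℝ) (f := fun y => fderiv ℝ u (x + r • y))
      (c * r)) y
  rw [lap_eq_fderiv, lap_eq_fderiv, h1, h3, Finset.mul_sum]
  refine Finset.sum_congr rfl fun i _ => ?_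
  simp only [smul_apply, smul_eq_mul]
  ring

lemma iterLap_comp_affine (u : EuclideanSpace ℝ (Fin n) → ℝ)
    (x : EuclideanSpace ℝ (Fin n)) (r : ℝ) (j : ℕ) :
    iterLap j (fun y => u (x + r • y)) = fun y => r ^ (2 * j) * iterLap j u (x + r • y) := by
  induction j with
  | zero => simp [iterLap_zero]
  | succ j ih =>
    rw [iterLap_succ, ih, lap_const_mul_comp_affine, iterLap_succ]
    ext y
    ring

end Basic

/-! ### Integration by parts -/

section Parts

variable {n : ℕ}

lemma integral_mul_fderiv_eq_neg {f g : EuclideanSpace ℝ (Fin n) → ℝ}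
    (hf : ContDiff ℝ 1 f) (hg : ContDiff ℝ 1 g) (hgc : HasCompactSupport g)
    (v : EuclideanSpace ℝ (Fin n)) :
    ∫ x, f x * fderiv ℝ g x v = - ∫ x, fderiv ℝ f x v * g x := by
  have hf' : Continuous fun x => fderiv ℝ f x v :=
    (hf.continuous_fderiv (by norm_num)).clm_apply continuous_const
  have hg' : Continuous fun x => fderiv ℝ g x v :=
    (hg.continuous_fderiv (by norm_num)).clm_apply continuous_const
  refine integral_mul_fderiv_eq_neg_fderiv_mul_of_integrable ?_ ?_ ?_ ?_ ?_
  · exact (hf'.mul hg.continuous).integrable_of_hasCompactSupport hgc.mul_left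
  · exact (hf.continuous.mul hg').integrable_of_hasCompactSupport
      (hgc.fderiv_apply (𝕜 := ℝ) v).mul_left
  · exact (hf.continuous.mul hg.continuous).integrable_of_hasCompactSupport hgc.mul_left
  · exact fun x _ => hf.differentiable (by norm_num) x
  · exact fun x _ => hg.differentiable (by norm_num) x

/-- Green's first identity on the whole space, with one factor compactly supported. -/
lemma integral_lap_mul {u φ : EuclideanSpace ℝ (Fin n) → ℝ} (hu : ContDiff ℝ 2 u)
    (hφ : ContDiff ℝ 1 φ) (hc : HasCompactSupport φ) :
    ∫ x, lap u x * φ x = - ∑ i : Fin n, ∫ x, fderiv ℝ u x (EuclideanSpace.single i 1) *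
      fderiv ℝ φ x (EuclideanSpace.single i 1) := by
  have h1 : ContDiff ℝ 1 (fderiv ℝ u) := hu.fderiv_right (by norm_num)
  have h2 : Continuous (fderiv ℝ (fderiv ℝ u)) := h1.continuous_fderiv (by norm_num)
  simp_rw [lap_eq_fderiv, Finset.sum_mul]
  rw [integral_finsetSum, ← Finset.sum_neg_distrib]
  · refine Finset.sum_congr rfl fun i _ => ?_
    rw [integral_mul_fderiv_eq_neg (h1.clm_apply contDiff_const) hφ hc, neg_neg]
    refine integral_congr_ae (Eventually.of_forall fun x => ?_)
    have h3 : fderiv ℝ (fun x => fderiv ℝ u x (EuclideanSpace.single i 1)) x =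
        (fderiv ℝ (fderiv ℝ u) x).flip (EuclideanSpace.single i 1) := by
      rw [fderiv_clm_apply (h1.differentiable (by norm_num) x) (by fun_prop)]
      simp
    simp [h3]
  · intro i _
    exact (((h2.clm_apply continuous_const).clm_apply continuous_const).mul
      hφ.continuous).integrable_of_hasCompactSupport hc.mul_left

lemma integral_mul_lap {u φ : EuclideanSpace ℝ (Fin n) → ℝ} (hu : ContDiff ℝ 1 u)
    (hφ : ContDiff ℝ 2 φ) (hc : HasCompactSupport φ) :
    ∫ x, u x * lap φ x = - ∑ i : Fin n, ∫ x, fderiv ℝ u x (EuclideanSpace.single i 1) *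
      fderiv ℝ φ x (EuclideanSpace.single i 1) := by
  have h1 : ContDiff ℝ 1 (fderiv ℝ φ) := hφ.fderiv_right (by norm_num)
  have h2 : Continuous (fderiv ℝ (fderiv ℝ φ)) := h1.continuous_fderiv (by norm_num)
  have h3 : ∀ i : Fin n, ∀ x,
      fderiv ℝ (fun x => fderiv ℝ φ x (EuclideanSpace.single i 1)) x =
        (fderiv ℝ (fderiv ℝ φ) x).flip (EuclideanSpace.single i 1) := by
    intro i x
    rw [fderiv_clm_apply (h1.differentiable (by norm_num) x) (by fun_prop)]
    simp
  simp_rw [lap_eq_fderiv, Finset.mul_sum]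
  rw [integral_finsetSum, ← Finset.sum_neg_distrib]
  · refine Finset.sum_congr rfl fun i _ => ?_
    have h4 := integral_mul_fderiv_eq_neg hu
      (h1.clm_apply (contDiff_const (c := EuclideanSpace.single i 1)))
      (hc.fderiv_apply (𝕜 := ℝ) _) (EuclideanSpace.single i 1)
    rw [← h4]
    simp [h3]
  · intro i _
    refine (hu.continuous.mul ((h2.clm_apply continuous_const).clm_apply
      continuous_const)).integrable_of_hasCompactSupport (HasCompactSupport.mul_left ?_)
    have h5 := (hc.fderiv_apply (𝕜 := ℝ) (EuclideanSpace.single i (1 : ℝ))).fderiv_apply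
      (𝕜 := ℝ) (EuclideanSpace.single i (1 : ℝ))
    simpa [h3] using h5

lemma hasCompactSupport_lap {φ : EuclideanSpace ℝ (Fin n) → ℝ} (hc : HasCompactSupport φ) :
    HasCompactSupport (lap φ) := by
  refine HasCompactSupport.intro hc fun x hx => ?_
  have h := iterLap_eventuallyEq (notMem_tsupport_iff_eventuallyEq.1 hx) 1
  have h0 : lap φ x = iterLap 1 (fun _ : EuclideanSpace ℝ (Fin n) => (0 : ℝ)) x := h.eq_of_nhds
  rw [h0, iterLap_const_zero]

lemma integral_iterLap_mul (j : ℕ) {u φ : EuclideanSpace ℝ (Fin n) → ℝ}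
    (hu : ContDiff ℝ ((2 * j : ℕ)) u) (hφ : ContDiff ℝ (⊤ : ℕ∞) φ) (hc : HasCompactSupport φ) :
    ∫ x, iterLap j u x * φ x = ∫ x, u x * iterLap j φ x := by
  induction j generalizing φ with
  | zero => rfl
  | succ j ih =>
    have hu2 : ContDiff ℝ 2 (iterLap j u) := by
      refine contDiff_iterLap (m := 2) j ?_
      convert hu using 2
      ring
    have hφ2 : ContDiff ℝ 2 φ := contDiff_infty.1 hφ 2
    have hlap : ContDiff ℝ (⊤ : ℕ∞) (lap φ) := by
      refine contDiff_infty.2 fun m => ?_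
      exact contDiff_iterLap (m := m) 1 (contDiff_infty.1 hφ _)
    rw [iterLap_succ, integral_lap_mul hu2 (hφ2.of_le (by norm_num)) hc,
      ← integral_mul_lap (hu2.of_le (by norm_num)) hφ2 hc,
      ih (hu.of_le (by norm_cast; omega)) hlap (hasCompactSupport_lap hc)]
    simp only [iterLap, Function.iterate_succ_apply]

end Parts

/-! ### Mean values and the interior estimate -/

section MeanValue

variable {n : ℕ}

/-- A nonnegative radial kernel `φ` supported in the unit ball, together with the potential `Φ` of
the radial vector field `y ↦ -φ(y) y`, itself supported in the unit ball. -/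
lemma exists_radial_kernel (hn : 0 < n) : ∃ Φ φ : EuclideanSpace ℝ (Fin n) → ℝ,
    ContDiff ℝ (⊤ : ℕ∞) Φ ∧ ContDiff ℝ (⊤ : ℕ∞) φ ∧
    (∀ y, 1 < ‖y‖ → Φ y = 0) ∧ (∀ y, 1 < ‖y‖ → φ y = 0) ∧
    (∀ y v, fderiv ℝ Φ y v = -(φ y * inner ℝ y v)) ∧ 0 < ∫ y, φ y := by
  have hT : ContDiff ℝ (⊤ : ℕ∞) smoothTransition := smoothTransition.contDiff
  have hT' : ContDiff ℝ (⊤ : ℕ∞) (deriv smoothTransition) := (contDiff_infty_iff_deriv.1 hT).2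
  have hq : ContDiff ℝ (⊤ : ℕ∞) fun y : EuclideanSpace ℝ (Fin n) => 1 - ‖y‖ ^ 2 :=
    contDiff_const.sub (contDiff_norm_sq ℝ)
  have hφ : ContDiff ℝ (⊤ : ℕ∞) fun y : EuclideanSpace ℝ (Fin n) =>
      2 * deriv smoothTransition (1 - ‖y‖ ^ 2) := contDiff_const.mul (hT'.comp hq)
  have hsupp : ∀ y : EuclideanSpace ℝ (Fin n), 1 < ‖y‖ →
      2 * deriv smoothTransition (1 - ‖y‖ ^ 2) = 0 := by
    intro y hy
    have hneg : 1 - ‖y‖ ^ 2 < 0 := by nlinarith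
    have : smoothTransition =ᶠ[𝓝 (1 - ‖y‖ ^ 2)] fun _ => 0 := by
      filter_upwards [Iio_mem_nhds hneg] with t ht
      exact smoothTransition.zero_of_nonpos (le_of_lt ht)
    rw [this.deriv_eq]
    simp
  refine ⟨fun y => smoothTransition (1 - ‖y‖ ^ 2),
    fun y => 2 * deriv smoothTransition (1 - ‖y‖ ^ 2), hT.comp hq, hφ, ?_, hsupp, ?_, ?_⟩
  · intro y hy
    exact smoothTransition.zero_of_nonpos (by nlinarith)
  · intro y v
    have h1 : HasFDerivAt (fun y : EuclideanSpace ℝ (Fin n) => 1 - ‖y‖ ^ 2)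
        (-(2 • innerSL ℝ y)) y := (hasStrictFDerivAt_norm_sq y).hasFDerivAt.const_sub 1
    have h2 : HasDerivAt smoothTransition (deriv smoothTransition (1 - ‖y‖ ^ 2))
        (1 - ‖y‖ ^ 2) := (hT.differentiable (by simp) _).hasDerivAt
    have h3 := (h2.comp_hasFDerivAt y h1).fderiv
    have h4 : fderiv ℝ (fun y : EuclideanSpace ℝ (Fin n) => smoothTransition (1 - ‖y‖ ^ 2)) y =
      deriv smoothTransition (1 - ‖y‖ ^ 2) • (-(2 • innerSL ℝ y)) := h3
    rw [h4]
    simp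
    ring
  · -- `smoothTransition` rises from `0` to `1` on `[0, 1]`, so its slope equals `1` somewhere.
    obtain ⟨c, hc, hc'⟩ := exists_deriv_eq_slope smoothTransition (zero_lt_one' ℝ)
      hT.continuous.continuousOn (hT.differentiable (by simp)).differentiableOn
    refine hφ.continuous.integral_pos_of_hasCompactSupport_nonneg_nonzero
      (x := √(1 - c) • EuclideanSpace.single ⟨0, hn⟩ (1 : ℝ)) ?_ ?_ ?_
    · refine HasCompactSupport.intro (isCompact_closedBall 0 1) fun y hy => hsupp y ?_
      simpa using hy
    · exact fun y => mul_nonneg zero_le_two smoothTransition.monotone.deriv_nonneg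
    · have : ‖√(1 - c) • (EuclideanSpace.single ⟨0, hn⟩ (1 : ℝ) :
          EuclideanSpace ℝ (Fin n))‖ ^ 2 = 1 - c := by
        rw [norm_smul, mul_pow]
        simp [Real.sq_sqrt (show 0 ≤ 1 - c by linarith [hc.2])]
      simp only [this]
      simp [hc']

lemma hasDerivAt_dilation_integral {h φ : EuclideanSpace ℝ (Fin n) → ℝ} (hh : ContDiff ℝ 1 h)
    (hφ : Continuous φ) (hs : ∀ y, 1 < ‖y‖ → φ y = 0) (t : ℝ) :
    HasDerivAt (fun t : ℝ => ∫ y, h (t • y) * φ y) (∫ y, fderiv ℝ h (t • y) y * φ y) t := by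
  have hc : HasCompactSupport φ :=
    HasCompactSupport.intro (isCompact_closedBall 0 1) fun y hy => hs y (by simpa using hy)
  have hD : Continuous (fderiv ℝ h) := hh.continuous_fderiv (by norm_num)
  have hG : Continuous fun p : ℝ × EuclideanSpace ℝ (Fin n) => fderiv ℝ h (p.1 • p.2) p.2 :=
    (hD.comp (by fun_prop)).clm_apply continuous_snd
  obtain ⟨M, hM⟩ := ((isCompact_closedBall t 1).prod
    (isCompact_closedBall (0 : EuclideanSpace ℝ (Fin n)) 1)).exists_bound_of_continuousOn
    hG.continuousOn
  refine (hasDerivAt_integral_of_dominated_loc_of_deriv_le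
    (F := fun (t : ℝ) y => h (t • y) * φ y) (F' := fun (t : ℝ) y => fderiv ℝ h (t • y) y * φ y)
    (bound := fun y => M * ‖φ y‖) (s := ball t 1) (ball_mem_nhds t one_pos) ?_ ?_ ?_ ?_ ?_ ?_).2
  · refine Eventually.of_forall fun s => Continuous.aestronglyMeasurable ?_
    exact (hh.continuous.comp (by fun_prop)).mul hφ
  · exact ((hh.continuous.comp (by fun_prop)).mul hφ).integrable_of_hasCompactSupport hc.mul_left
  · exact ((hG.comp (by fun_prop : Continuous fun y : EuclideanSpace ℝ (Fin n) =>
      (t, y))).mul hφ).aestronglyMeasurable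
  · refine Eventually.of_forall fun y s hsb => ?_
    by_cases hy : 1 < ‖y‖
    · simp [hs y hy]
    · rw [norm_mul]
      refine mul_le_mul_of_nonneg_right (hM (s, y) ⟨ball_subset_closedBall hsb, ?_⟩)
        (norm_nonneg _)
      simpa using hy
  · exact (continuous_const.mul hφ.norm).integrable_of_hasCompactSupport hc.norm.mul_left
  · refine Eventually.of_forall fun y s _ => ?_
    have h1 : HasDerivAt (fun s : ℝ => s • y) y s := by
      simpa using (hasDerivAt_id s).smul_const y
    have h2 := (hh.differentiable (by norm_num) (s • y)).hasFDerivAt.comp_hasDerivAt s h1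
    exact h2.mul_const (φ y)

/-- Mean value property against a radial kernel: the average of `h (t • y)` is constant in `t`,
its derivative being `t` times the integral of `lap h (t • y)` against the potential of the
kernel. -/
lemma mean_value {h Φ φ : EuclideanSpace ℝ (Fin n) → ℝ} (hh : ContDiff ℝ 2 h)
    (hharm : ∀ y, ‖y‖ ≤ 1 → lap h y = 0)
    (hΦ : ContDiff ℝ 1 Φ) (hφ : Continuous φ)
    (hsΦ : ∀ y, 1 < ‖y‖ → Φ y = 0) (hsφ : ∀ y, 1 < ‖y‖ → φ y = 0)
    (hΦφ : ∀ y v, fderiv ℝ Φ y v = -(φ y * inner ℝ y v)) :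
    ∫ y, h y * φ y = h 0 * ∫ y, φ y := by
  have hh1 : ContDiff ℝ 1 h := hh.of_le (by norm_num)
  have hD : Continuous (fderiv ℝ h) := hh1.continuous_fderiv (by norm_num)
  have hder := hasDerivAt_dilation_integral hh1 hφ hsφ
  obtain ⟨t, ht, hslope⟩ := exists_hasDerivAt_eq_slope _ _ (zero_lt_one' ℝ)
    (fun t _ => (hder t).continuousAt.continuousWithinAt) (fun t _ => hder t)
  have hcφ : HasCompactSupport φ :=
    HasCompactSupport.intro (isCompact_closedBall 0 1) fun y hy => hsφ y (by simpa using hy)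
  have hcΦ : HasCompactSupport Φ :=
    HasCompactSupport.intro (isCompact_closedBall 0 1) fun y hy => hsΦ y (by simpa using hy)
  have hft : ContDiff ℝ 2 fun y => h (0 + t • y) := hh.comp (by fun_prop)
  have hgreen := integral_lap_mul hft hΦ hcΦ
  have hlap : ∀ y, lap (fun y => h (0 + t • y)) y * Φ y = 0 := by
    intro y
    by_cases hy : 1 < ‖y‖
    · simp [hsΦ y hy]
    · have h1 := congrFun (lap_const_mul_comp_affine h 0 1 t) y
      simp only [one_mul, zero_add] at h1 ⊢
      rw [h1, hharm, mul_zero, zero_mul]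
      rw [norm_smul, norm_eq_abs, abs_of_pos ht.1]
      nlinarith [ht.1, ht.2, norm_nonneg y]
  simp only [hlap, integral_zero, fderiv_comp_affine, hΦφ] at hgreen
  simp only [zero_add] at hgreen
  rw [← integral_finsetSum] at hgreen
  · have hexp : ∀ y : EuclideanSpace ℝ (Fin n),
        ∑ i : Fin n, (t • fderiv ℝ h (t • y)) (EuclideanSpace.single i 1) *
          -(φ y * inner ℝ y (EuclideanSpace.single i (1 : ℝ))) =
        -t * (fderiv ℝ h (t • y) y * φ y) := by
      intro y
      have hy : y = ∑ i : Fin n, y i • (EuclideanSpace.single i (1 : ℝ)) := by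
        simpa using ((EuclideanSpace.basisFun (Fin n) ℝ).sum_repr y).symm
      have h2 : fderiv ℝ h (t • y) y =
          ∑ i : Fin n, y i * fderiv ℝ h (t • y) (EuclideanSpace.single i (1 : ℝ)) := by
        have h3 := congrArg (fderiv ℝ h (t • y)) hy
        simpa only [map_sum, map_smul, smul_eq_mul] using h3
      rw [h2, Finset.sum_mul, Finset.mul_sum]
      refine Finset.sum_congr rfl fun i _ => ?_
      simp [EuclideanSpace.inner_single_right]
      ring
    simp only [hexp] at hgreen
    rw [integral_const_mul] at hgreen
    have h3 : ∫ y, fderiv ℝ h (t • y) y * φ y = 0 := by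
      have := ht.1
      have h4 : t * ∫ y, fderiv ℝ h (t • y) y * φ y = 0 := by linarith
      exact (mul_eq_zero.1 h4).resolve_left this.ne'
    rw [h3] at hslope
    simp only [one_smul, zero_smul, integral_const_mul, sub_zero, div_one] at hslope
    linarith
  · intro i _
    refine Continuous.integrable_of_hasCompactSupport ?_ (hcφ.mul_right.neg.mul_left)
    have : Continuous fun y => fderiv ℝ h (t • y) := hD.comp (by fun_prop)
    exact (((this.const_smul t).clm_apply continuous_const)).mul (by fun_prop)

/-- Interior estimate on the unit ball for the top-order iterated Laplacian of a polyharmonic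
function: test the harmonic function `iterLap j u` against a radial kernel and move all the
Laplacians onto the kernel. -/
lemma interior_bound (hn : 0 < n) (j : ℕ) : ∃ A : ℝ, 0 ≤ A ∧
    ∀ (u : EuclideanSpace ℝ (Fin n) → ℝ) (B : ℝ),
      ContDiffOn ℝ ((2 * (j + 1) : ℕ)) u (ball 0 2) →
      (∀ y ∈ ball (0 : EuclideanSpace ℝ (Fin n)) 2, iterLap (j + 1) u y = 0) →
      (∀ y, ‖y‖ ≤ 1 → |u y| ≤ B) → |iterLap j u 0| ≤ A * B := by
  obtain ⟨Φ, φ, hΦ, hφ, hsΦ, hsφ, hΦφ, hpos⟩ := exists_radial_kernel hn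
  have hcφ : HasCompactSupport φ :=
    HasCompactSupport.intro (isCompact_closedBall 0 1) fun y hy => hsφ y (by simpa using hy)
  have hLsupp : ∀ y, 1 < ‖y‖ → iterLap j φ y = 0 := by
    intro y hy
    have h1 : φ =ᶠ[𝓝 y] fun _ => 0 := by
      filter_upwards [(isOpen_lt continuous_const continuous_norm).mem_nhds hy] with z hz
      exact hsφ z hz
    rw [(iterLap_eventuallyEq h1 j).eq_of_nhds, iterLap_const_zero]
  have hLcont : Continuous (iterLap j φ) :=
    (contDiff_iterLap (m := 0) j (contDiff_infty.1 hφ _)).continuous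
  have hLc : HasCompactSupport (iterLap j φ) :=
    HasCompactSupport.intro (isCompact_closedBall 0 1) fun y hy => hLsupp y (by simpa using hy)
  refine ⟨(∫ y, |iterLap j φ y|) / ∫ y, φ y,
    div_nonneg (integral_nonneg fun _ => abs_nonneg _) hpos.le, fun u B hu hpde hB => ?_⟩
  -- Cutting `u` off outside the ball of radius `3/2` makes it globally smooth.
  let χ : ContDiffBump (0 : EuclideanSpace ℝ (Fin n)) := ⟨3 / 2, 7 / 4, by norm_num, by norm_num⟩
  let w : EuclideanSpace ℝ (Fin n) → ℝ := fun y => χ y * u y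
  have hw : ContDiff ℝ ((2 * (j + 1) : ℕ)) w := by
    refine contDiff_iff_contDiffAt.2 fun y => ?_
    by_cases hy : y ∈ ball (0 : EuclideanSpace ℝ (Fin n)) 2
    · exact χ.contDiffAt.mul (hu.contDiffAt (isOpen_ball.mem_nhds hy))
    · have hy2 : 7 / 4 < ‖y‖ := by
        have : 2 ≤ ‖y‖ := by simpa using hy
        linarith
      refine (contDiffAt_const (c := (0 : ℝ))).congr_of_eventuallyEq ?_
      filter_upwards [(isOpen_lt continuous_const continuous_norm).mem_nhds hy2] with z hz
      have : χ z = 0 := χ.zero_of_le_dist (by simpa using (le_of_lt hz))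
      simp [w, this]
  have hwu : ∀ y, ‖y‖ ≤ 1 → w =ᶠ[𝓝 y] u := by
    intro y hy
    have hy2 : ‖y‖ < 3 / 2 := by linarith
    filter_upwards [(isOpen_lt continuous_norm continuous_const).mem_nhds hy2] with z hz
    have : χ z = 1 := χ.one_of_mem_closedBall (by simpa using (le_of_lt hz))
    simp [w, this]
  have h2 : ContDiff ℝ 2 (iterLap j w) := by
    refine contDiff_iterLap (m := 2) j ?_
    convert hw using 2
    ring
  have hmv := mean_value h2 (fun y hy => by
      rw [← iterLap_succ, (iterLap_eventuallyEq (hwu y hy) (j + 1)).eq_of_nhds]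
      exact hpde y (by simp; linarith))
    (contDiff_infty.1 hΦ 1) hφ.continuous hsΦ hsφ hΦφ
  rw [integral_iterLap_mul j (hw.of_le (by norm_cast; omega)) hφ hcφ,
    (iterLap_eventuallyEq (hwu 0 (by simp)) j).eq_of_nhds] at hmv
  have hbound : |∫ y, w y * iterLap j φ y| ≤ ∫ y, B * |iterLap j φ y| := by
    refine norm_integral_le_of_norm_le (f := fun y => w y * iterLap j φ y) ?_
      (Eventually.of_forall fun y => ?_)
    · exact (continuous_const.mul hLcont.abs).integrable_of_hasCompactSupport
        hLc.norm.mul_left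
    · by_cases hy : 1 < ‖y‖
      · simp [hLsupp y hy]
      · rw [norm_mul, (hwu y (not_lt.1 hy)).eq_of_nhds]
        exact mul_le_mul_of_nonneg_right (hB y (not_lt.1 hy)) (norm_nonneg _)
  rw [hmv, integral_const_mul, abs_mul, abs_of_pos hpos] at hbound
  rw [div_mul_eq_mul_div, le_div_iff₀ hpos]
  linarith

end MeanValue

/-! ### A maximum principle on the punctured space -/

section MaxPrinciple

variable {n : ℕ}

lemma deriv_deriv_line {g : EuclideanSpace ℝ (Fin n) → ℝ} {x : EuclideanSpace ℝ (Fin n)}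
    (hg : ContDiffAt ℝ 2 g x) (v : EuclideanSpace ℝ (Fin n)) :
    deriv (deriv fun t : ℝ => g (x + t • v)) 0 = fderiv ℝ (fderiv ℝ g) x v v := by
  have hline : ∀ t : ℝ, HasDerivAt (fun t : ℝ => x + t • v) v t := fun t => by
    simpa using ((hasDerivAt_id t).smul_const v).const_add x
  have hx : x = x + (0 : ℝ) • v := by simp
  have h1 : ∀ᶠ t in 𝓝 (0 : ℝ), ContDiffAt ℝ 2 g (x + t • v) := by
    refine (hline 0).continuousAt.eventually ?_
    simpa only [← hx] using hg.eventually (by simp)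
  have h2 : deriv (fun t : ℝ => g (x + t • v)) =ᶠ[𝓝 0] fun t => fderiv ℝ g (x + t • v) v := by
    filter_upwards [h1] with t ht
    exact ((ht.differentiableAt (by norm_num)).hasFDerivAt.comp_hasDerivAt t (hline t)).deriv
  rw [h2.deriv_eq]
  have h3 : HasFDerivAt (fderiv ℝ g) (fderiv ℝ (fderiv ℝ g) x) (x + (0 : ℝ) • v) := by
    rw [← hx]
    exact ((hg.fderiv_right (m := 1) (by norm_num)).differentiableAt (by norm_num)).hasFDerivAt
  have h4 : HasDerivAt (fun t : ℝ => fderiv ℝ g (x + t • v)) (fderiv ℝ (fderiv ℝ g) x v) 0 :=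
    h3.comp_hasDerivAt (0 : ℝ) (hline 0)
  have h5 : HasDerivAt (fun t : ℝ => fderiv ℝ g (x + t • v) v) (fderiv ℝ (fderiv ℝ g) x v v) 0 := by
    simpa using h4.clm_apply (hasDerivAt_const (0 : ℝ) v)
  exact h5.deriv

lemma lap_nonpos_of_isLocalMax {g : EuclideanSpace ℝ (Fin n) → ℝ} {x : EuclideanSpace ℝ (Fin n)}
    (hg : ContDiffAt ℝ 2 g x) (hmax : IsLocalMax g x) : lap g x ≤ 0 := by
  rw [lap_eq_fderiv]
  refine Finset.sum_nonpos fun i _ => ?_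
  rw [← deriv_deriv_line hg]
  set f : ℝ → ℝ := fun t => g (x + t • EuclideanSpace.single i (1 : ℝ)) with hf
  by_contra! hpos
  have hcont : ContinuousAt (fun t : ℝ => x + t • EuclideanSpace.single i (1 : ℝ)) 0 := by
    fun_prop
  have hx : x + (0 : ℝ) • EuclideanSpace.single i (1 : ℝ) = x := by simp
  have hfmax : IsLocalMax f 0 := by
    have h1 := hcont.eventually (p := fun y => g y ≤ g x) (by
      simpa only [hx] using (show ∀ᶠ y in 𝓝 x, g y ≤ g x from hmax))
    filter_upwards [h1] with t ht
    simpa [hf] using ht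
  have hfc : ContinuousAt f 0 :=
    ContinuousAt.comp (g := g) (by rw [hx]; exact hg.continuousAt) hcont
  have hfmin := isLocalMin_of_deriv_deriv_pos hpos hfmax.deriv_eq_zero hfc
  -- A point that is both a local minimum and a local maximum has a vanishing second derivative.
  have hconst : f =ᶠ[𝓝 0] fun _ => f 0 := by
    filter_upwards [hfmax, hfmin] with t h1 h2
    exact le_antisymm h1 h2
  have h0 : deriv (deriv f) 0 = 0 := by
    rw [hconst.deriv.deriv_eq]
    simp
  exact hpos.ne' h0

lemma contDiffAt_norm_rpow (p : ℝ) {x : EuclideanSpace ℝ (Fin n)} (hx : x ≠ 0) {m : WithTop ℕ∞} :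
    ContDiffAt ℝ m (fun y : EuclideanSpace ℝ (Fin n) => ‖y‖ ^ p) x :=
  (contDiffAt_norm ℝ hx).rpow_const_of_ne (norm_ne_zero_iff.2 hx)

/-- The powers `‖x‖ ^ (-α)` with `0 < α < n - 2` are strictly superharmonic, since
`Δ ‖x‖ ^ (-α) = -α (n - 2 - α) ‖x‖ ^ (-α - 2)`. -/
lemma lap_norm_rpow_neg {α : ℝ} (hα : 0 < α) (hα' : α < (n : ℝ) - 2)
    {x : EuclideanSpace ℝ (Fin n)} (hx : x ≠ 0) :
    lap (fun y : EuclideanSpace ℝ (Fin n) => ‖y‖ ^ (-α)) x < 0 := by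
  have hN : 0 < ‖x‖ ^ 2 := by positivity
  set s := ‖x‖ ^ 2 with hs
  set p := -α / 2 with hp
  have key : ∀ i : Fin n,
      fderiv ℝ (fderiv ℝ fun y : EuclideanSpace ℝ (Fin n) => ‖y‖ ^ (-α)) x
        (EuclideanSpace.single i 1) (EuclideanSpace.single i 1) =
      4 * p * (p - 1) * s ^ (p - 2) * x i ^ 2 + 2 * p * s ^ (p - 1) := by
    intro i
    rw [← deriv_deriv_line (contDiffAt_norm_rpow (-α) hx)]
    have h1 : (fun t : ℝ => ‖x + t • EuclideanSpace.single i (1 : ℝ)‖ ^ (-α)) =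
        fun t => (s + 2 * x i * t + t ^ 2) ^ p := by
      ext t
      have h2 : ‖x + t • EuclideanSpace.single i (1 : ℝ)‖ ^ 2 = s + 2 * x i * t + t ^ 2 := by
        rw [norm_add_sq_real, inner_smul_right, EuclideanSpace.inner_single_right, norm_smul]
        simp [hs]
        ring
      rw [← h2, ← rpow_natCast, ← rpow_mul (norm_nonneg _)]
      congr 1
      rw [hp]
      push_cast
      ring
    rw [h1]
    have hq : ∀ t : ℝ, HasDerivAt (fun t : ℝ => s + 2 * x i * t + t ^ 2)
        (2 * x i + 2 * t) t := by
      intro t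
      have := (((hasDerivAt_id t).const_mul (2 * x i)).const_add s).add (hasDerivAt_pow 2 t)
      refine HasDerivAt.congr_deriv this ?_
      simp
    have hpos : ∀ᶠ t in 𝓝 (0 : ℝ), s + 2 * x i * t + t ^ 2 ≠ 0 := by
      refine (hq 0).continuousAt.eventually_ne ?_
      simpa using hN.ne'
    have hd : deriv (fun t : ℝ => (s + 2 * x i * t + t ^ 2) ^ p) =ᶠ[𝓝 0]
        fun t => (2 * x i + 2 * t) * p * (s + 2 * x i * t + t ^ 2) ^ (p - 1) := by
      filter_upwards [hpos] with t ht
      exact ((hq t).rpow_const (Or.inl ht)).deriv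
    rw [hd.deriv_eq]
    have h3 : HasDerivAt (fun t : ℝ => (2 * x i + 2 * t) * p) (2 * p) 0 := by
      have := (((hasDerivAt_id (0 : ℝ)).const_mul 2).const_add (2 * x i)).mul_const p
      simpa using this
    have h4 := (hq 0).rpow_const (p := p - 1) (Or.inl hpos.self_of_nhds)
    have h5 : deriv (fun t : ℝ => (2 * x i + 2 * t) * p *
        (s + 2 * x i * t + t ^ 2) ^ (p - 1)) 0 = _ := (h3.mul h4).deriv
    rw [h5]
    simp only [mul_zero, add_zero, ne_eq, OfNat.ofNat_ne_zero, not_false_eq_true, zero_pow]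
    rw [show p - 1 - 1 = p - 2 by ring]
    ring
  rw [lap_eq_fderiv, Finset.sum_congr rfl fun i _ => key i, Finset.sum_add_distrib,
    ← Finset.mul_sum]
  have hsum : ∑ i : Fin n, x i ^ 2 = s := by
    rw [hs, EuclideanSpace.norm_sq_eq]
    simp
  have hpow : s ^ (p - 2) * s = s ^ (p - 1) := by
    rw [← rpow_add_one hN.ne']
    congr 1
    ring
  have hs1 : 0 < s ^ (p - 1) := rpow_pos_of_pos hN _
  have hval : 4 * p * (p - 1) * s ^ (p - 2) * s + (n : ℝ) * (2 * p * s ^ (p - 1)) =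
      -(α * ((n : ℝ) - 2 - α)) * s ^ (p - 1) := by
    rw [mul_assoc _ (s ^ (p - 2)) s, hpow, hp]
    ring
  rw [hsum, Finset.sum_const, Finset.card_univ, Fintype.card_fin, nsmul_eq_mul, hval]
  have : 0 < α * ((n : ℝ) - 2 - α) := mul_pos hα (by linarith)
  nlinarith

lemma lap_sub_const_mul {v w : EuclideanSpace ℝ (Fin n) → ℝ} {x : EuclideanSpace ℝ (Fin n)}
    (hv : ContDiffAt ℝ 2 v x) (hw : ContDiffAt ℝ 2 w x) (c : ℝ) :
    lap (fun y => v y - c * w y) x = lap v x - c * lap w x := by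
  have h1 : lap (fun y => c * w y) x = c * lap w x := by
    simpa using congrFun (lap_const_mul_comp_affine w 0 c 1) x
  have hcw : ContDiffAt ℝ 2 (fun y => c * w y) x := contDiffAt_const.mul hw
  rw [← h1]
  simp only [lap, ← Finset.sum_sub_distrib]
  refine Finset.sum_congr rfl fun i _ => ?_
  rw [fun_iteratedFDeriv_sub_apply (i := 2) hv hcw]
  rfl

/-- A harmonic function on the punctured space bounded above by `D ‖x‖ ^ (-β)` with
`0 < β < n - 2` is nonpositive: subtract a small multiple of the strictly superharmonic
`‖x‖ ^ (-α)` with `β < α < n - 2`, which dominates at the origin. -/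
lemma nonpos_of_harmonic {v : EuclideanSpace ℝ (Fin n) → ℝ} {β D : ℝ} (hβ : 0 < β)
    (hβ' : β < (n : ℝ) - 2) (hv : ∀ x, x ≠ 0 → ContDiffAt ℝ 2 v x)
    (hharm : ∀ x, x ≠ 0 → lap v x = 0) (hD : ∀ x, x ≠ 0 → v x ≤ D * ‖x‖ ^ (-β)) :
    ∀ x, x ≠ 0 → v x ≤ 0 := by
  intro x₀ hx₀
  by_contra! hpos
  obtain ⟨α, hβα, hα'⟩ := exists_between hβ'
  have hα : 0 < α := hβ.trans hβα
  have hN0 : 0 < ‖x₀‖ := norm_pos_iff.2 hx₀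
  set δ := v x₀ / 2 * ‖x₀‖ ^ α with hδ
  have hδpos : 0 < δ := by positivity
  set w : EuclideanSpace ℝ (Fin n) → ℝ := fun y => v y - δ * ‖y‖ ^ (-α) with hw
  have hw0 : w x₀ = v x₀ / 2 := by
    simp only [hw, hδ]
    rw [mul_assoc, ← rpow_add hN0]
    simp
    ring
  have hwc : ∀ x, x ≠ 0 → ContDiffAt ℝ 2 w x := fun x hx =>
    (hv x hx).sub (contDiffAt_const.mul (contDiffAt_norm_rpow (-α) hx))
  -- Far from the origin `w` is smaller than `w x₀`.
  obtain ⟨R, hR⟩ : ∃ R : ℝ, ∀ t ≥ R, D * t ^ (-β) < v x₀ / 2 := by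
    have h1 : Tendsto (fun t : ℝ => D * t ^ (-β)) atTop (𝓝 (D * 0)) :=
      (tendsto_rpow_neg_atTop hβ).const_mul D
    rw [mul_zero] at h1
    exact eventually_atTop.1 (h1.eventually_lt_const (half_pos hpos))
  -- Near the origin `w` is nonpositive.
  obtain ⟨ρ, hρ, hρ'⟩ : ∃ ρ > 0, ∀ t : ℝ, 0 < t → t < ρ → D * t ^ (α - β) < δ := by
    have h1 : ContinuousAt (fun t : ℝ => D * t ^ (α - β)) 0 :=
      continuousAt_const.mul (continuousAt_id.rpow_const (Or.inr (by simp; linarith)))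
    have h2 : ∀ᶠ t in 𝓝 (0 : ℝ), D * t ^ (α - β) < δ := by
      refine h1.eventually_lt_const ?_
      simpa [zero_rpow (sub_pos.2 hβα).ne'] using hδpos
    obtain ⟨ρ, hρ, h⟩ := Metric.eventually_nhds_iff.1 h2
    exact ⟨ρ, hρ, fun t ht ht' => h (by simpa [abs_of_pos ht] using ht')⟩
  have hfar : ∀ x, x ≠ 0 → R ≤ ‖x‖ → w x < w x₀ := by
    intro x hx hxR
    have h1 := hR _ hxR
    have h2 := hD x hx
    have h3 : 0 < δ * ‖x‖ ^ (-α) := mul_pos hδpos (rpow_pos_of_pos (norm_pos_iff.2 hx) _)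
    rw [hw0]
    simp only [hw]
    linarith
  have hnear : ∀ x, x ≠ 0 → ‖x‖ < ρ → w x < w x₀ := by
    intro x hx hxρ
    have hxp := norm_pos_iff.2 hx
    have h1 := hρ' _ hxp hxρ
    have h2 := hD x hx
    have h3 : ‖x‖ ^ (-β) = ‖x‖ ^ (α - β) * ‖x‖ ^ (-α) := by
      rw [← rpow_add hxp]
      congr 1
      ring
    have h4 : 0 < ‖x‖ ^ (-α) := rpow_pos_of_pos hxp _
    have h5 : D * ‖x‖ ^ (-β) ≤ δ * ‖x‖ ^ (-α) := by
      rw [h3, ← mul_assoc]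
      exact mul_le_mul_of_nonneg_right h1.le h4.le
    rw [hw0]
    simp only [hw]
    linarith
  let K : Set (EuclideanSpace ℝ (Fin n)) := closedBall 0 R ∩ {x | ρ ≤ ‖x‖}
  have hK : IsCompact K :=
    (isCompact_closedBall 0 R).inter_right (isClosed_le continuous_const continuous_norm)
  have hK0 : ∀ x ∈ K, x ≠ 0 := fun x hx => norm_pos_iff.1 (hρ.trans_le hx.2)
  have hout : ∀ x, x ≠ 0 → x ∉ K → w x < w x₀ := by
    intro x hx hxK
    by_cases h : ‖x‖ < ρ
    · exact hnear x hx h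
    · refine hfar x hx (le_of_not_ge fun h' => hxK ⟨by simpa using h', not_lt.1 h⟩)
  have hx₀K : x₀ ∈ K := by
    by_contra h
    exact lt_irrefl _ (hout x₀ hx₀ h)
  obtain ⟨x₁, hx₁, hmax⟩ := hK.exists_isMaxOn ⟨x₀, hx₀K⟩
    (fun x hx => (hwc x (hK0 x hx)).continuousAt.continuousWithinAt)
  have hx₁0 := hK0 x₁ hx₁
  have hlocmax : IsLocalMax w x₁ := by
    filter_upwards [isOpen_compl_singleton.mem_nhds hx₁0] with x hx
    by_cases hxK : x ∈ K
    · exact hmax hxK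
    · exact (hout x hx hxK).le.trans (hmax hx₀K)
  have h1 := lap_nonpos_of_isLocalMax (hwc x₁ hx₁0) hlocmax
  rw [hw, lap_sub_const_mul (hv x₁ hx₁0) (contDiffAt_norm_rpow (-α) hx₁0), hharm x₁ hx₁0] at h1
  have h2 := mul_neg_of_pos_of_neg hδpos (lap_norm_rpow_neg hα hα' hx₁0)
  linarith

end MaxPrinciple

/-! ### Decay of the iterated Laplacian and the Liouville property -/

/-- Rescaling the interior estimate to the ball of radius `‖x‖ / 4` about `x`, the `j`-fold
iterated Laplacian gains a decay factor `‖x‖ ^ (-2 j)`. -/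
lemma iterLap_decay {n : ℕ} (hn : 0 < n) (j : ℕ) {γ C : ℝ} (hγ : 0 < γ) (hC : 0 < C)
    {ψ : EuclideanSpace ℝ (Fin n) → ℝ}
    (hψ : ContDiffOn ℝ ((2 * (j + 1) : ℕ)) ψ {(0 : EuclideanSpace ℝ (Fin n))}ᶜ)
    (hpde : ∀ x, x ≠ 0 → iterLap (j + 1) ψ x = 0)
    (hdecay : ∀ x, x ≠ 0 → |ψ x| ≤ C * ‖x‖ ^ (-γ)) :
    ∃ D : ℝ, ∀ x, x ≠ 0 → |iterLap j ψ x| ≤ D * ‖x‖ ^ (-(γ + 2 * j)) := by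
  obtain ⟨A, hA, hbd⟩ := interior_bound hn j
  refine ⟨A * (C * (1 / 2) ^ (-γ)) * 4 ^ (2 * j), fun x hx => ?_⟩
  have hxp : 0 < ‖x‖ := norm_pos_iff.2 hx
  set r := ‖x‖ / 4 with hr
  have hrp : 0 < r := by positivity
  have hlow : ∀ y : EuclideanSpace ℝ (Fin n), ‖x‖ - r * ‖y‖ ≤ ‖x + r • y‖ := by
    intro y
    have h1 := norm_sub_norm_le x (-(r • y))
    rw [norm_neg, norm_smul, norm_eq_abs, abs_of_pos hrp, sub_neg_eq_add] at h1
    exact h1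
  have hne : ∀ y ∈ ball (0 : EuclideanSpace ℝ (Fin n)) 2, x + r • y ≠ 0 := by
    intro y hy
    have hy' : ‖y‖ < 2 := by simpa using hy
    refine norm_pos_iff.1 (lt_of_lt_of_le ?_ (hlow y))
    nlinarith
  have h := hbd (fun y => ψ (x + r • y)) (C * ((1 / 2) * ‖x‖) ^ (-γ)) ?_ ?_ ?_
  · simp only [iterLap_comp_affine, smul_zero, add_zero] at h
    rw [abs_mul, abs_of_pos (pow_pos hrp _), mul_rpow (by norm_num) hxp.le, hr, div_pow] at h
    rw [neg_add, rpow_add hxp, rpow_neg hxp.le (2 * (j : ℝ))]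
    rw [show ‖x‖ ^ (2 * (j : ℝ)) = ‖x‖ ^ (2 * j) by exact_mod_cast rpow_natCast ‖x‖ (2 * j)]
    have h4 : (0 : ℝ) < 4 ^ (2 * j) := by positivity
    have hx4 : 0 < ‖x‖ ^ (2 * j) := by positivity
    rw [← div_eq_mul_inv, ← mul_div_assoc, le_div_iff₀ hx4]
    rw [div_mul_eq_mul_div, div_le_iff₀ h4] at h
    linarith
  · refine hψ.comp (ContDiff.contDiffOn (by fun_prop)) fun y hy => hne y hy
  · intro y hy
    simp only [iterLap_comp_affine]
    rw [hpde _ (hne y hy), mul_zero]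
  · intro y hy
    have h1 : (1 / 2) * ‖x‖ ≤ ‖x + r • y‖ := by
      refine le_trans ?_ (hlow y)
      nlinarith
    refine (hdecay _ (hne y (by simp; linarith))).trans ?_
    exact mul_le_mul_of_nonneg_left
      (rpow_le_rpow_of_nonpos (by positivity) h1 (by linarith)) hC.le

/-- The Liouville property, by induction on the order of the equation: `iterLap k ψ` is harmonic
with decay rate `γ + 2 k < n - 2`, hence zero, which lowers the order by one. -/
lemma polyharmonic_liouville {n : ℕ} (k : ℕ) {γ C : ℝ} (hγ0 : 0 < γ) (hC : 0 < C)
    (hγ : γ < (n : ℝ) - 2 * k) {ψ : EuclideanSpace ℝ (Fin n) → ℝ}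
    (hψ : ContDiffOn ℝ ((2 * k : ℕ)) ψ {(0 : EuclideanSpace ℝ (Fin n))}ᶜ)
    (hpde : ∀ x, x ≠ 0 → iterLap k ψ x = 0)
    (hdecay : ∀ x, x ≠ 0 → |ψ x| ≤ C * ‖x‖ ^ (-γ)) : ∀ x, x ≠ 0 → ψ x = 0 := by
  induction k with
  | zero => exact hpde
  | succ k ih =>
    push_cast at hγ
    have hn : 0 < n := by
      have : (0 : ℝ) < n := by nlinarith [(Nat.cast_nonneg k : (0 : ℝ) ≤ k)]
      exact_mod_cast this
    obtain ⟨D, hD⟩ := iterLap_decay hn k hγ0 hC hψ hpde hdecay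
    have hopen : IsOpen ({0}ᶜ : Set (EuclideanSpace ℝ (Fin n))) := isOpen_compl_singleton
    have hsmooth : ContDiffOn ℝ (2 : ℕ) (iterLap k ψ) {(0 : EuclideanSpace ℝ (Fin n))}ᶜ := by
      refine contDiffOn_iterLap hopen k ?_
      convert hψ using 2
      ring
    have hat : ∀ x, x ≠ 0 → ContDiffAt ℝ 2 (iterLap k ψ) x := fun x hx =>
      hsmooth.contDiffAt (hopen.mem_nhds hx)
    have hβ : 0 < γ + 2 * (k : ℝ) := by positivity
    have hβ' : γ + 2 * (k : ℝ) < (n : ℝ) - 2 := by linarith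
    rw [iterLap_succ] at hpde
    have hle := nonpos_of_harmonic hβ hβ' hat hpde
      (fun x hx => (le_abs_self _).trans (hD x hx))
    have hneg : ∀ x, x ≠ 0 → lap (fun y => -iterLap k ψ y) x = 0 := by
      intro x hx
      have h1 := lap_sub_const_mul (contDiffAt_const (c := (0 : ℝ))) (hat x hx) 1
      simp only [one_mul, zero_sub] at h1
      rw [h1, hpde x hx]
      simp [lap_eq_fderiv]
    have hge := nonpos_of_harmonic hβ hβ' (fun x hx => (hat x hx).neg) hneg
      (fun x hx => (neg_le_abs _).trans (hD x hx))
    refine ih (by linarith) (hψ.of_le (by norm_cast; omega)) fun x hx => ?_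
    exact le_antisymm (hle x hx) (by linarith [hge x hx])

theorem stmt17 (n k : ℕ) (hk : 2 ≤ 2 * k) (hn : 2 * k < n)
    (γ : ℝ) (hγ0 : 0 < γ) (hγ : γ < (n : ℝ) - 2 * k)
    (ψ : EuclideanSpace ℝ (Fin n) → ℝ)
    (hψ : ContDiffOn ℝ (2 * k : ℕ) ψ {(0 : EuclideanSpace ℝ (Fin n))}ᶜ)
    (hpde : ∀ x : EuclideanSpace ℝ (Fin n), x ≠ 0 → iterLap k ψ x = 0)
    (C : ℝ) (hC : 0 < C)
    (hdecay : ∀ x : EuclideanSpace ℝ (Fin n), x ≠ 0 → |ψ x| ≤ C * ‖x‖ ^ (-γ)) :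
    ∀ x : EuclideanSpace ℝ (Fin n), x ≠ 0 → ψ x = 0 :=
  polyharmonic_liouville k hγ0 hC hγ hψ hpde hdecay
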